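/- Let α ∈ 𝕀 be an irrational power series and (Q_k)_{k≥1} the denominators of its continued fraction convergents. If liminf_{k→∞} (log ‖Q_k‖)/k < ∞, then for every ε > 0 the set Bad^ε(α) has Hausdorff dimension strictly less than 1. -/

import Mathlib

/-!
Common setup: the field `𝔽_q((z⁻¹))` of formal power series over a finite field `K` of
cardinality `q`, modeled as the field `FF K` of formal Laurent series in `t = z⁻¹`,
together with its non-Archimedean norm, the embedding of the polynomial ring `𝔽_q[z]`,
distances to polynomial (vectors), Diophantine exponents, `Bad` sets, continued fractions
and best approximation sequences.
-/

open scoped Classical ENNReal NNReal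
open Filter

noncomputable section

namespace FPSDA

variable (K : Type*) [Field K] [Fintype K]

/-- The field `𝔽_q((z⁻¹))` of formal power series in `z⁻¹` over the finite field `K = 𝔽_q`,
modeled as the field of formal Laurent series in the variable `t = z⁻¹`. -/
def FF : Type _ := LaurentSeries K

instance : Field (FF K) := inferInstanceAs (Field (LaurentSeries K))

variable {K}

/-- The identity map, viewing an element of `𝔽_q((z⁻¹))` as a Laurent series in `t = z⁻¹`. -/
def toL (x : FF K) : LaurentSeries K := x

@[simp] lemma toL_zero : toL (0 : FF K) = 0 := rfl
@[simp] lemma toL_add (x y : FF K) : toL (x + y) = toL x + toL y := rfl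
@[simp] lemma toL_neg (x : FF K) : toL (-x) = -toL x := rfl
@[simp] lemma toL_sub (x y : FF K) : toL (x - y) = toL x - toL y := rfl
lemma toL_eq_zero {x : FF K} : toL x = 0 ↔ x = 0 := Iff.rfl

/-- The norm `‖x‖ = q ^ (deg x)` on `𝔽_q((z⁻¹))`, where
`deg x = - (order of x as a Laurent series in z⁻¹)`; `‖0‖ = 0`. -/
def fnorm (x : FF K) : ℝ :=
  if toL x = 0 then 0 else (Fintype.card K : ℝ) ^ (-(toL x).order)

lemma one_le_q : (1 : ℝ) ≤ (Fintype.card K : ℝ) := by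
  exact_mod_cast Fintype.card_pos

lemma fnorm_nonneg (x : FF K) : 0 ≤ fnorm x := by
  unfold fnorm
  split_ifs
  · exact le_refl 0
  · exact zpow_nonneg (by positivity) _

lemma fnorm_eq_zero {x : FF K} : fnorm x = 0 ↔ x = 0 := by
  unfold fnorm
  split_ifs with h
  · exact ⟨fun _ => toL_eq_zero.mp h, fun _ => rfl⟩
  · constructor
    · intro hc
      exact absurd hc (zpow_ne_zero _ (by
        have h0 : (0:ℝ) < (Fintype.card K : ℝ) := by positivity
        exact ne_of_gt h0))
    · intro hc
      exact absurd (toL_eq_zero.mpr hc) h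

lemma fnorm_neg (x : FF K) : fnorm (-x) = fnorm x := by
  unfold fnorm
  rw [toL_neg]
  simp [neg_eq_zero, HahnSeries.order_neg]

lemma fnorm_add_le (x y : FF K) : fnorm (x + y) ≤ max (fnorm x) (fnorm y) := by
  by_cases hxy : x + y = 0
  · rw [fnorm_eq_zero.mpr hxy]
    exact le_max_of_le_left (fnorm_nonneg x)
  by_cases hx : x = 0
  · rw [hx, zero_add]
    exact le_max_right _ _
  by_cases hy : y = 0
  · rw [hy, add_zero]
    exact le_max_left _ _
  have horder : min (toL x).order (toL y).order ≤ (toL (x + y)).order := by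
    rw [toL_add]
    exact HahnSeries.min_order_le_order_add (show toL x + toL y ≠ 0 from hxy)
  have h1 : fnorm (x + y) = (Fintype.card K : ℝ) ^ (-(toL (x+y)).order) := by
    unfold fnorm
    rw [if_neg (show toL (x + y) ≠ 0 from hxy)]
  rcases le_total (toL x).order (toL y).order with h | h
  · have h2 : (toL x).order ≤ (toL (x+y)).order := le_trans (by simp [min_eq_left h]) horder
    refine le_max_of_le_left ?_
    rw [h1]
    unfold fnorm
    rw [if_neg (show toL x ≠ 0 from hx)]
    exact zpow_le_zpow_right₀ one_le_q (by omega)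
  · have h2 : (toL y).order ≤ (toL (x+y)).order := le_trans (by simp [min_eq_right h]) horder
    refine le_max_of_le_right ?_
    rw [h1]
    unfold fnorm
    rw [if_neg (show toL y ≠ 0 from hy)]
    exact zpow_le_zpow_right₀ one_le_q (by omega)

/-- The (ultra)metric `dist x y = ‖x - y‖` on `𝔽_q((z⁻¹))`. -/
instance : MetricSpace (FF K) where
  dist x y := fnorm (x - y)
  dist_self x := by
    show fnorm (x - x) = 0
    rw [sub_self]
    exact fnorm_eq_zero.mpr rfl
  dist_comm x y := by
    show fnorm (x - y) = fnorm (y - x)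
    have h : x - y = -(y - x) := by ring
    rw [h, fnorm_neg]
  dist_triangle x y z := by
    show fnorm (x - z) ≤ fnorm (x - y) + fnorm (y - z)
    have h : x - z = (x - y) + (y - z) := by ring
    calc fnorm (x - z) ≤ max (fnorm (x - y)) (fnorm (y - z)) := by
          rw [h]; exact fnorm_add_le _ _
      _ ≤ fnorm (x - y) + fnorm (y - z) :=
        max_le (le_add_of_nonneg_right (fnorm_nonneg _)) (le_add_of_nonneg_left (fnorm_nonneg _))
  eq_of_dist_eq_zero := by
    intro x y h
    have h' : x - y = 0 := fnorm_eq_zero.mp h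
    exact sub_eq_zero.mp h'

instance : MeasurableSpace (FF K) := borel _
instance : BorelSpace (FF K) := ⟨rfl⟩

/-- The canonical embedding of the polynomial ring `𝔽_q[z]` into `𝔽_q((z⁻¹))`:
the variable `z` is sent to `t⁻¹ = single (-1) 1`. -/
def polyF (P : Polynomial K) : FF K :=
  Polynomial.aeval (HahnSeries.single (-1 : ℤ) (1 : K)) P

/-- Supremum norm of a vector with entries in `𝔽_q((z⁻¹))`. -/
def vnorm {ι : Type*} [Fintype ι] (v : ι → FF K) : ℝ := ⨆ i, fnorm (v i)

/-- `⟨v⟩`, the distance from the vector `v` to the nearest polynomial vector. -/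
def vdist {ι : Type*} [Fintype ι] (v : ι → FF K) : ℝ :=
  ⨅ y : ι → Polynomial K, vnorm (fun i => v i - polyF (y i))

/-- `⟨x⟩`, the distance from the scalar `x` to the nearest polynomial. -/
def sdist (x : FF K) : ℝ := ⨅ y : Polynomial K, fnorm (x - polyF y)

/-- The fractional part `{x} = Σ_{i ≥ 1} a_i z^{-i}` of `x = Σ_i a_i z^{-i}`. -/
def fracPart (x : FF K) : FF K :=
  (⟨fun i => if 1 ≤ i then (toL x).coeff i else 0, (toL x).isPWO_support'.mono (by
      intro i hi
      by_cases h : (1:ℤ) ≤ i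
      · simpa [Function.mem_support, h] using hi
      · simp [Function.mem_support, h] at hi)⟩ : LaurentSeries K)

/-- The integer part `[x] = Σ_{i ≤ 0} a_i z^{-i}` of `x = Σ_i a_i z^{-i}`, as a polynomial
in `z`. -/
def intPoly (x : FF K) : Polynomial K :=
  ∑ i ∈ Finset.range ((-(toL x).order).toNat + 1),
    Polynomial.monomial i ((toL x).coeff (-(i : ℤ)))

/-- `x ∈ 𝔽_q((z⁻¹))` is irrational if it is not in `𝔽_q(z)`, i.e. is not a ratio of two
polynomials in `z`. -/
def FIrrational (x : FF K) : Prop :=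
  ∀ P Q : Polynomial K, Q ≠ 0 → x * polyF Q ≠ polyF P

section Exponents

variable {m n : ℕ}

/-- The norm `‖x‖ = max_j ‖x_j‖` of a polynomial vector `x`. -/
def pnorm {ι : Type*} [Fintype ι] (x : ι → Polynomial K) : ℝ :=
  vnorm (fun i => (polyF (x i) : FF K))

/-- The system `⟨A x - θ⟩ ≤ H^{-ω}`, `‖x‖ ≤ H` has a polynomial solution `x`. -/
def Solv (A : Matrix (Fin n) (Fin m) (FF K)) (θ : Fin n → FF K) (ω H : ℝ) : Prop :=
  ∃ x : Fin m → Polynomial K,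
    vdist (A.mulVec (fun j => polyF (x j)) - θ) ≤ H ^ (-ω) ∧ pnorm x ≤ H

/-- The system `⟨A x⟩ ≤ H^{-ω}`, `‖x‖ ≤ H` has a nonzero polynomial solution `x`. -/
def SolvHom (A : Matrix (Fin n) (Fin m) (FF K)) (ω H : ℝ) : Prop :=
  ∃ x : Fin m → Polynomial K, x ≠ 0 ∧
    vdist (A.mulVec (fun j => polyF (x j))) ≤ H ^ (-ω) ∧ pnorm x ≤ H

/-- The inhomogeneous exponent `ω(A, θ)`: the supremum (in `[0,∞]`) of all `ω` such that
for arbitrarily large `H` the system `⟨A x - θ⟩ ≤ H^{-ω}`, `‖x‖ ≤ H` has a polynomial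
solution. -/
def omegaInhom (A : Matrix (Fin n) (Fin m) (FF K)) (θ : Fin n → FF K) : ℝ≥0∞ :=
  ⨆ (ω : ℝ) (_ : ∀ H₀ : ℝ, ∃ H : ℝ, H₀ ≤ H ∧ Solv A θ ω H), ENNReal.ofReal ω

/-- The uniform inhomogeneous exponent `ω̂(A, θ)`: as `ω(A, θ)`, but with a solution for
all sufficiently large `H`. -/
def omegaHatInhom (A : Matrix (Fin n) (Fin m) (FF K)) (θ : Fin n → FF K) : ℝ≥0∞ :=
  ⨆ (ω : ℝ) (_ : ∃ H₀ : ℝ, ∀ H : ℝ, H₀ ≤ H → Solv A θ ω H), ENNReal.ofReal ω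

/-- The homogeneous exponent `ω(A)`. -/
def omegaHom (A : Matrix (Fin n) (Fin m) (FF K)) : ℝ≥0∞ :=
  ⨆ (ω : ℝ) (_ : ∀ H₀ : ℝ, ∃ H : ℝ, H₀ ≤ H ∧ SolvHom A ω H), ENNReal.ofReal ω

/-- The uniform homogeneous exponent `ω̂(A)`. -/
def omegaHatHom (A : Matrix (Fin n) (Fin m) (FF K)) : ℝ≥0∞ :=
  ⨆ (ω : ℝ) (_ : ∃ H₀ : ℝ, ∀ H : ℝ, H₀ ≤ H → SolvHom A ω H), ENNReal.ofReal ω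

/-- `A` is non-degenerate: the `𝔽_q[z]`-module `Aᵀ 𝔽_q[z]ⁿ + 𝔽_q[z]^m ⊆ 𝔽_q((z⁻¹))^m` has
rank `m + n` over `𝔽_q[z]`, i.e. its `m + n` natural generators are linearly independent
over `𝔽_q[z]`; equivalently, no nonzero polynomial vector `u` makes `Aᵀ u` a polynomial
vector. -/
def Nondegenerate (A : Matrix (Fin n) (Fin m) (FF K)) : Prop :=
  ∀ u : Fin n → Polynomial K,
    (∃ v : Fin m → Polynomial K,
      A.transpose.mulVec (fun i => polyF (u i)) = fun j => polyF (v j)) → u = 0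

/-- `liminf_{x ∈ 𝔽_q[z]^m, ‖x‖ → ∞} ‖x‖^{m/n} ⟨A x - θ⟩`, computed in `[0, ∞]`. -/
def badLiminf (A : Matrix (Fin n) (Fin m) (FF K)) (θ : Fin n → FF K) : ℝ≥0∞ :=
  Filter.liminf
    (fun x : Fin m → Polynomial K =>
      ENNReal.ofReal ((pnorm x) ^ ((m : ℝ) / (n : ℝ)) *
        vdist (A.mulVec (fun j => polyF (x j)) - θ)))
    (Filter.comap (fun x : Fin m → Polynomial K => pnorm x) Filter.atTop)

/-- The set `Bad^ε(A)` of `θ` in the unit polydisc `𝕀ⁿ` with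
`liminf_{‖x‖ → ∞} ‖x‖^{m/n} ⟨A x - θ⟩ ≥ ε`. -/
def Bad (A : Matrix (Fin n) (Fin m) (FF K)) (ε : ℝ) : Set (Fin n → FF K) :=
  {θ | (∀ i, fnorm (θ i) < 1) ∧ ENNReal.ofReal ε ≤ badLiminf A θ}

/-- The set `Bad(A) = ⋃_{ε > 0} Bad^ε(A)`. -/
def BadAll (A : Matrix (Fin n) (Fin m) (FF K)) : Set (Fin n → FF K) :=
  ⋃ (ε : ℝ) (_ : 0 < ε), Bad A ε

/-- `M(y) = ⟨Aᵀ y⟩` for a polynomial vector `y`. -/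
def Mfun (A : Matrix (Fin n) (Fin m) (FF K)) (y : Fin n → Polynomial K) : ℝ :=
  vdist (A.transpose.mulVec (fun i => polyF (y i)))

/-- `y 1, y 2, …` is a sequence of best approximations related to `Aᵀ`:
`1 = Y_1 < Y_2 < ⋯`, `M_1 > M_2 > ⋯`, and `M(x) ≥ M_k` for every nonzero polynomial
vector `x` with `‖x‖ < Y_{k+1}` (the value `y 0` is irrelevant). -/
def IsBestApproxSeq (A : Matrix (Fin n) (Fin m) (FF K))
    (y : ℕ → Fin n → Polynomial K) : Prop :=
  pnorm (y 1) = 1 ∧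
  (∀ k, 1 ≤ k → pnorm (y k) < pnorm (y (k + 1))) ∧
  (∀ k, 1 ≤ k → Mfun A (y (k + 1)) < Mfun A (y k)) ∧
  (∀ k, 1 ≤ k → ∀ x : Fin n → Polynomial K, x ≠ 0 → pnorm x < pnorm (y (k + 1)) →
    Mfun A (y k) ≤ Mfun A x)

end Exponents

section Scalar

/-- The system `⟨ξ x - θ⟩ ≤ H^{-ω}`, `‖x‖ ≤ H` has a polynomial solution `x`. -/
def sSolv (ξ θ : FF K) (ω H : ℝ) : Prop :=
  ∃ x : Polynomial K, sdist (ξ * polyF x - θ) ≤ H ^ (-ω) ∧ fnorm (polyF x) ≤ H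

/-- The scalar inhomogeneous exponent `ω((ξ), θ)`. -/
def somegaInhom (ξ θ : FF K) : ℝ≥0∞ :=
  ⨆ (ω : ℝ) (_ : ∀ H₀ : ℝ, ∃ H : ℝ, H₀ ≤ H ∧ sSolv ξ θ ω H), ENNReal.ofReal ω

/-- The scalar uniform inhomogeneous exponent `ω̂((ξ), θ)`. -/
def somegaHatInhom (ξ θ : FF K) : ℝ≥0∞ :=
  ⨆ (ω : ℝ) (_ : ∃ H₀ : ℝ, ∀ H : ℝ, H₀ ≤ H → sSolv ξ θ ω H), ENNReal.ofReal ω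

/-- The scalar homogeneous exponent `ω((ξ))`. -/
def somegaHom (ξ : FF K) : ℝ≥0∞ :=
  ⨆ (ω : ℝ) (_ : ∀ H₀ : ℝ, ∃ H : ℝ, H₀ ≤ H ∧ ∃ x : Polynomial K, x ≠ 0 ∧
      sdist (ξ * polyF x) ≤ H ^ (-ω) ∧ fnorm (polyF x) ≤ H), ENNReal.ofReal ω

/-- `liminf_{x ∈ 𝔽_q[z], ‖x‖ → ∞} ‖x‖ ⟨α x - θ⟩`, computed in `[0, ∞]`. -/
def sBadLiminf (α θ : FF K) : ℝ≥0∞ :=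
  Filter.liminf
    (fun x : Polynomial K => ENNReal.ofReal (fnorm (polyF x) * sdist (α * polyF x - θ)))
    (Filter.comap (fun x : Polynomial K => fnorm (polyF x)) Filter.atTop)

/-- The set `Bad^ε(α)` of `θ ∈ 𝕀` with `liminf_{‖x‖ → ∞} ‖x‖ ⟨α x - θ⟩ ≥ ε`. -/
def sBad (α : FF K) (ε : ℝ) : Set (FF K) :=
  {θ | fnorm θ < 1 ∧ ENNReal.ofReal ε ≤ sBadLiminf α θ}

end Scalar

section CF

/-- The Gauss map `T x = 1/x - [1/x]` on `𝔽_q((z⁻¹))`. -/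
def gaussMap (x : FF K) : FF K := fracPart x⁻¹

/-- `pquot α k` is the `(k+1)`-st partial quotient `A_{k+1} = [1 / T^k α]` of the
continued fraction expansion of `α`. -/
def pquot (α : FF K) (k : ℕ) : Polynomial K := intPoly ((gaussMap^[k] α)⁻¹)

/-- `cfQ α k` is the denominator `Q_k` of the `k`-th convergent of the continued fraction
expansion of `α`: `Q_0 = 1`, `Q_1 = A_1`, `Q_{k+2} = A_{k+2} Q_{k+1} + Q_k`. -/
def cfQ (α : FF K) : ℕ → Polynomial K
  | 0 => 1
  | 1 => pquot α 0
  | (k + 2) => pquot α (k + 1) * cfQ α (k + 1) + cfQ α k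

/-- `α` is singular on average: for every `c > 0` the proportion of `l ∈ {1, …, N}` for
which `‖{Q α}‖ ≤ c 2^{-l}` has a solution `Q ∈ 𝔽_q[z]` with `0 < ‖Q‖ ≤ 2^l` tends to `1`
as `N → ∞`. -/
def SingularOnAverage (α : FF K) : Prop :=
  ∀ c : ℝ, 0 < c →
    Filter.Tendsto
      (fun N : ℕ =>
        (((Finset.Icc 1 N).filter (fun l : ℕ =>
            ∃ Q : Polynomial K, Q ≠ 0 ∧ fnorm (polyF Q) ≤ 2 ^ l ∧
              fnorm (fracPart (polyF Q * α)) ≤ c / 2 ^ l)).card : ℝ) / (N : ℝ))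
      Filter.atTop (nhds 1)

end CF

end FPSDA

open FPSDA MeasureTheory

/-!
Let `c` be such that `q^(-c) < ε`. For every `θ₀` in the unit ball and every `k`, solving a linear
congruence modulo `Q_k` yields a point `α x - y` with `‖x‖ = ‖Q_k‖` at distance less than
`‖Q_k‖⁻¹` from `θ₀`, and no `θ` within `‖Q_k‖⁻¹ q^(-c)` of that point satisfies
`‖x‖ ⟨α x - θ⟩ ≥ ε`. So inside each digit cylinder of length `deg Q_k` the bad set misses a
cylinder `c` digits longer, and every `c` convergents the proportion of cylinders meeting the bad
set shrinks by the factor `1 - q^(-c)`. When `‖Q_k‖ ≤ e^(L k)`, this exponential decay in `k` is a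
power of `‖Q_k‖`, and counting cylinders of length `deg Q_k` for infinitely many such `k` bounds
the dimension by `1 + log (1 - q^(-c)) / (c L) < 1`.
-/

namespace FPSDA

section HausdorffDimension

lemma dimH_le_of_frequently_cover {X β : Type*} [EMetricSpace X] {S : Set X} {l : Filter β}
    {ι : β → Type*} [∀ n, Fintype (ι n)] {t : ∀ n, ι n → Set X} {r : β → ℝ≥0∞}
    (hr : Tendsto r l (nhds 0)) (hdiam : ∀ n i, Metric.ediam (t n i) ≤ r n)
    (hcover : ∀ n, S ⊆ ⋃ i, t n i) {s : ℝ≥0} {C : ℝ≥0∞} (hC : C ≠ ⊤)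
    (hcard : ∃ᶠ n in l, Fintype.card (ι n) * r n ^ (s : ℝ) ≤ C) :
    dimH S ≤ s := by
  borelize X
  have hmeasure := Measure.hausdorffMeasure_le_liminf_sum s S r hr t
    (Eventually.of_forall hdiam) (Eventually.of_forall hcover)
  refine dimH_le_of_hausdorffMeasure_ne_top (ne_top_of_le_ne_top hC (hmeasure.trans ?_))
  refine liminf_le_of_frequently_le' (hcard.mono fun n hn ↦ ?_)
  calc ∑ i, Metric.ediam (t n i) ^ (s : ℝ)
      ≤ ∑ _i : ι n, r n ^ (s : ℝ) :=
        Finset.sum_le_sum fun i _ ↦ ENNReal.rpow_le_rpow (hdiam n i) s.coe_nonneg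
    _ = Fintype.card (ι n) * r n ^ (s : ℝ) := by simp
    _ ≤ C := hn

end HausdorffDimension

section Prefixes

open PiNat

lemma append_initialSegment {A : Type*} (x : ℕ → A) (n m : ℕ) :
    Fin.append (fun i : Fin n ↦ x i) (fun j : Fin m ↦ x (n + j)) =
      fun i : Fin (n + m) ↦ x i :=
  Fin.append_castAdd_natAdd (f := fun i : Fin (n + m) ↦ x i)

variable {A : Type*} [Fintype A]

/-- The words of length `n` that are initial segments of sequences in `S`; they index the
cylinders of length `n` meeting `S`. -/
def prefixes (S : Set (ℕ → A)) (n : ℕ) : Finset (Fin n → A) :=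
  {w | ∃ x ∈ S, (fun i : Fin n ↦ x i) = w}

/-- The proportion of the words of length `n` that are initial segments of sequences in `S`. -/
def prefixDensity (S : Set (ℕ → A)) (n : ℕ) : ℝ :=
  (prefixes S n).card / (Fintype.card A : ℝ) ^ n

/-- Porosity of `S` at scale `n` with depth `c`: every cylinder of length `n` around a point
of `S` contains a cylinder of length `n + c` disjoint from `S`. -/
def IsPorousAt (S : Set (ℕ → A)) (n c : ℕ) : Prop :=
  ∀ x ∈ S, ∃ y ∈ cylinder x n, Disjoint S (cylinder y (n + c))

variable {S : Set (ℕ → A)} {n m b c : ℕ}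

lemma mem_prefixes {w : Fin n → A} : w ∈ prefixes S n ↔ ∃ x ∈ S, (fun i : Fin n ↦ x i) = w := by
  simp [prefixes]

lemma card_prefixes_le (S : Set (ℕ → A)) (n : ℕ) :
    (prefixes S n).card ≤ Fintype.card A ^ n := by
  simpa using (prefixes S n).card_le_univ

lemma card_prefixes_add_le
    (hb : ∀ w ∈ prefixes S n,
      Finset.card {v : Fin m → A | Fin.append w v ∈ prefixes S (n + m)} ≤ b) :
    (prefixes S (n + m)).card ≤ (prefixes S n).card * b := by
  set extensions : (Fin n → A) → Finset (Fin m → A) :=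
    fun w ↦ {v | Fin.append w v ∈ prefixes S (n + m)}
  have hsub : prefixes S (n + m) ⊆
      ((prefixes S n).sigma extensions).image fun p ↦ Fin.append p.1 p.2 := by
    intro w hw
    obtain ⟨x, hx, rfl⟩ := mem_prefixes.1 hw
    refine Finset.mem_image.2 ⟨⟨fun i ↦ x i, fun j ↦ x (n + j)⟩, ?_, append_initialSegment x n m⟩
    refine Finset.mem_sigma.2 ⟨mem_prefixes.2 ⟨x, hx, rfl⟩, (Finset.mem_filter_univ _).2 ?_⟩
    rwa [append_initialSegment]
  calc (prefixes S (n + m)).card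
      ≤ ((prefixes S n).sigma extensions).card :=
        (Finset.card_le_card hsub).trans Finset.card_image_le
    _ = ∑ w ∈ prefixes S n, (extensions w).card := Finset.card_sigma _ _
    _ ≤ (prefixes S n).card * b := Finset.sum_le_card_nsmul _ _ _ hb

lemma IsPorousAt.card_prefixes_add_le (hS : IsPorousAt S n c) :
    (prefixes S (n + c)).card ≤ (prefixes S n).card * (Fintype.card A ^ c - 1) := by
  refine FPSDA.card_prefixes_add_le fun w hw ↦ ?_
  obtain ⟨x, hx, rfl⟩ := mem_prefixes.1 hw
  obtain ⟨y, hyx, hy⟩ := hS x hx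
  have hxy : (fun i : Fin n ↦ x i) = fun i : Fin n ↦ y i :=
    funext fun i ↦ (mem_cylinder_iff.1 hyx i i.2).symm
  have hmissing : (fun j : Fin c ↦ y (n + j)) ∉
      ({v | Fin.append (fun i : Fin n ↦ x i) v ∈ prefixes S (n + c)} : Finset (Fin c → A)) := by
    rw [Finset.mem_filter_univ, hxy, append_initialSegment, mem_prefixes]
    rintro ⟨z, hz, hzy⟩
    exact Set.disjoint_left.1 hy hz (mem_cylinder_iff.2 fun i hi ↦ congrFun hzy ⟨i, hi⟩)
  have hcard := Finset.card_lt_univ_of_notMem hmissing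
  rw [Fintype.card_pi_const] at hcard
  exact Nat.le_sub_one_of_lt hcard

lemma prefixDensity_le_one (S : Set (ℕ → A)) (n : ℕ) : prefixDensity S n ≤ 1 :=
  div_le_one_of_le₀ (by exact_mod_cast card_prefixes_le S n) (by positivity)

variable [Nonempty A]

lemma prefixDensity_antitone (S : Set (ℕ → A)) : Antitone (prefixDensity S) := by
  refine antitone_nat_of_succ_le fun n ↦ ?_
  have hcard : (prefixes S (n + 1)).card ≤ (prefixes S n).card * Fintype.card A :=
    card_prefixes_add_le fun w _ ↦ (Finset.card_le_univ _).trans_eq (by simp)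
  unfold prefixDensity
  rw [pow_succ, div_le_div_iff₀ (by positivity) (by positivity)]
  calc ((prefixes S (n + 1)).card : ℝ) * (Fintype.card A : ℝ) ^ n
      ≤ (prefixes S n).card * Fintype.card A * (Fintype.card A : ℝ) ^ n := by
        gcongr; exact_mod_cast hcard
    _ = (prefixes S n).card * ((Fintype.card A : ℝ) ^ n * Fintype.card A) := by ring

lemma IsPorousAt.prefixDensity_add_le (hS : IsPorousAt S n c) :
    prefixDensity S (n + c) ≤ (1 - ((Fintype.card A : ℝ) ^ c)⁻¹) * prefixDensity S n := by
  have hcard : ((prefixes S (n + c)).card : ℝ) ≤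
      (prefixes S n).card * ((Fintype.card A : ℝ) ^ c - 1) := by
    have hone : 1 ≤ Fintype.card A ^ c := Nat.one_le_pow _ _ Fintype.card_pos
    exact_mod_cast hS.card_prefixes_add_le
  unfold prefixDensity
  rw [pow_add, div_le_iff₀ (by positivity)]
  refine hcard.trans_eq ?_
  field_simp

end Prefixes

section PorousDimension

open PiNat

lemma pow_add_mul_le_pow_of_contraction {u : ℕ → ℝ} {r : ℝ} {k₀ c : ℕ} (hr0 : 0 ≤ r)
    (hr1 : r ≤ 1) (hc : c ≠ 0) (hu : ∀ k, u k ≤ 1)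
    (hstep : ∀ k ≥ k₀, u (k + c) ≤ r ^ c * u k) (k : ℕ) :
    r ^ (k₀ + c) * u k ≤ r ^ k := by
  induction k using Nat.strong_induction_on with | _ k ih
  rcases lt_or_ge k (k₀ + c) with hk | hk
  · calc r ^ (k₀ + c) * u k ≤ r ^ (k₀ + c) := mul_le_of_le_one_right (by positivity) (hu k)
      _ ≤ r ^ k := pow_le_pow_of_le_one hr0 hr1 hk.le
  · obtain ⟨m, rfl⟩ := Nat.exists_eq_add_of_le' (le_of_add_le_right hk)
    calc r ^ (k₀ + c) * u (m + c) ≤ r ^ (k₀ + c) * (r ^ c * u m) := by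
          gcongr; exact hstep m (by lia)
      _ = r ^ c * (r ^ (k₀ + c) * u m) := by ring
      _ ≤ r ^ c * r ^ m := by gcongr; exact ih m (by lia)
      _ = r ^ (m + c) := by ring

lemma pow_le_rpow_log_div {r x L : ℝ} {k : ℕ} (hr0 : 0 < r) (hr1 : r ≤ 1) (hx : 0 < x)
    (hL : 0 < L) (hxk : Real.log x ≤ L * k) :
    r ^ k ≤ x ^ (Real.log r / L) := by
  rw [← Real.log_le_log_iff (by positivity) (by positivity), Real.log_pow, Real.log_rpow hx]
  calc (k : ℝ) * Real.log r = Real.log r / L * (L * k) := by field_simp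
    _ ≤ Real.log r / L * Real.log x := mul_le_mul_of_nonpos_left hxk
        (div_nonpos_of_nonpos_of_nonneg (Real.log_nonpos hr0.le hr1) hL.le)

variable {A : Type*} [Fintype A]

lemma dimH_le_of_frequently_card_prefixes_mul_le {X : Type*} [MetricSpace X] {S : Set X}
    {f : X → ℕ → A} {r : ℝ} (hr0 : 0 ≤ r) (hr1 : r < 1)
    (hf : ∀ x ∈ S, ∀ y ∈ S, ∀ n, f y ∈ cylinder (f x) n → dist x y ≤ r ^ n) {s : ℝ≥0} {C : ℝ}
    (hcard : ∃ᶠ n in atTop, (prefixes (f '' S) n).card * (r ^ n) ^ (s : ℝ) ≤ C) :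
    dimH S ≤ s := by
  refine dimH_le_of_frequently_cover (l := atTop) (ι := fun n ↦ prefixes (f '' S) n)
    (t := fun n w ↦ {x ∈ S | (fun i : Fin n ↦ f x i) = w}) (r := fun n ↦ ENNReal.ofReal (r ^ n))
    (C := ENNReal.ofReal C) ?_ (fun n w ↦ ?_) (fun n x hx ↦ ?_) ENNReal.ofReal_ne_top
    (hcard.mono fun n hn ↦ ?_)
  · simpa using ENNReal.tendsto_ofReal (tendsto_pow_atTop_nhds_zero_of_lt_one hr0 hr1)
  · refine Metric.ediam_le_of_forall_dist_le fun x hx y hy ↦ hf x hx.1 y hy.1 n ?_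
    exact mem_cylinder_iff.2 fun i hi ↦ congrFun (hy.2.trans hx.2.symm) ⟨i, hi⟩
  · exact Set.mem_iUnion.2 ⟨⟨_, mem_prefixes.2 ⟨f x, Set.mem_image_of_mem f hx, rfl⟩⟩, hx, rfl⟩
  · rw [Fintype.card_coe, ENNReal.ofReal_rpow_of_nonneg (by positivity) s.coe_nonneg,
      ← ENNReal.ofReal_natCast, ← ENNReal.ofReal_mul (by positivity)]
    exact ENNReal.ofReal_le_ofReal hn

lemma one_sub_inv_card_pow_lt_one [Nonempty A] (c : ℕ) : 1 - ((Fintype.card A : ℝ) ^ c)⁻¹ < 1 :=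
  sub_lt_self 1 (by positivity)

variable [Nontrivial A]

lemma one_sub_inv_card_pow_pos {c : ℕ} (hc : c ≠ 0) :
    0 < 1 - ((Fintype.card A : ℝ) ^ c)⁻¹ :=
  sub_pos.2 (inv_lt_one_of_one_lt₀ (one_lt_pow₀ (by exact_mod_cast Fintype.one_lt_card) hc))

lemma exists_card_prefixes_le_of_eventually_isPorousAt {S : Set (ℕ → A)} {d : ℕ → ℕ}
    (hd : StrictMono d) {c : ℕ} (hc : c ≠ 0) (hS : ∀ᶠ k in atTop, IsPorousAt S (d k) c)
    {r : ℝ} (hr0 : 0 < r) (hr : r ^ c = 1 - ((Fintype.card A : ℝ) ^ c)⁻¹) :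
    ∃ C > 0, ∀ k, ((prefixes S (d k)).card : ℝ) ≤ C * r ^ k * (Fintype.card A : ℝ) ^ d k := by
  obtain ⟨k₀, hk₀⟩ := eventually_atTop.1 hS
  have hr1 : r ≤ 1 := le_of_not_gt fun h ↦
    (one_sub_inv_card_pow_lt_one (A := A) c).not_ge (hr ▸ one_le_pow₀ h.le)
  have hstep : ∀ k ≥ k₀, prefixDensity S (d (k + c)) ≤ r ^ c * prefixDensity S (d k) := by
    intro k hk
    have hdc : d k + c ≤ d (k + c) := by
      rw [add_comm, add_comm k]; exact hd.add_le_nat c k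
    rw [hr]
    exact (prefixDensity_antitone S hdc).trans (hk₀ k hk).prefixDensity_add_le
  refine ⟨(r ^ (k₀ + c))⁻¹, by positivity, fun k ↦ ?_⟩
  have hdecay := pow_add_mul_le_pow_of_contraction hr0.le hr1 hc
    (fun k ↦ prefixDensity_le_one S (d k)) hstep k
  rw [← div_le_iff₀ (by positivity), inv_mul_eq_div, le_div_iff₀' (by positivity)]
  exact hdecay

theorem dimH_le_of_eventually_isPorousAt {X : Type*} [MetricSpace X] {S : Set X} {f : X → ℕ → A}
    (hf : ∀ x ∈ S, ∀ y ∈ S, ∀ n, f y ∈ cylinder (f x) n →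
      dist x y ≤ ((Fintype.card A : ℝ)⁻¹) ^ n)
    {d : ℕ → ℕ} (hd : StrictMono d) {c : ℕ} (hc : c ≠ 0)
    (hporous : ∀ᶠ k in atTop, IsPorousAt (f '' S) (d k) c) {L : ℝ} (hL : 0 < L)
    (hgrowth : ∃ᶠ k in atTop, Real.log ((Fintype.card A : ℝ) ^ d k) ≤ L * k) :
    dimH S ≤ ENNReal.ofReal (1 + Real.log (1 - ((Fintype.card A : ℝ) ^ c)⁻¹) / (c * L)) := by
  set q : ℝ := (Fintype.card A : ℝ)
  have hq1 : 1 < q := Nat.one_lt_cast.2 (Fintype.one_lt_card (α := A))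
  have hρ0 : 0 < 1 - (q ^ c)⁻¹ := one_sub_inv_card_pow_pos hc
  set r : ℝ := (1 - (q ^ c)⁻¹) ^ (c : ℝ)⁻¹ with hr
  have hr0 : 0 < r := Real.rpow_pos_of_pos hρ0 _
  have hr1 : r ≤ 1 := Real.rpow_le_one hρ0.le (one_sub_inv_card_pow_lt_one c).le (by positivity)
  have hexponent : 1 + Real.log (1 - (q ^ c)⁻¹) / (c * L) = 1 + Real.log r / L := by
    rw [hr, Real.log_rpow hρ0]; field_simp
  obtain ⟨C, hC, hcard⟩ := exists_card_prefixes_le_of_eventually_isPorousAt hd hc hporous hr0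
    (Real.rpow_inv_natCast_pow hρ0.le hc)
  rw [hexponent]
  refine dimH_le_of_frequently_card_prefixes_mul_le (inv_nonneg.2 (by positivity))
    (inv_lt_one_of_one_lt₀ hq1) hf (C := C) (hd.tendsto_atTop.frequently (hgrowth.mono ?_))
  intro k hk
  have hqd : 1 ≤ q ^ d k := one_le_pow₀ hq1.le
  have hqd0 : 0 < q ^ d k := by positivity
  rw [inv_pow, Real.inv_rpow hqd0.le, ← div_eq_mul_inv, div_le_iff₀ (by positivity)]
  calc ((prefixes (f '' S) (d k)).card : ℝ) ≤ C * r ^ k * q ^ d k := hcard k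
    _ ≤ C * (q ^ d k) ^ (Real.log r / L) * q ^ d k := by
        gcongr; exact pow_le_rpow_log_div hr0 hr1 hqd0 hL hk
    _ = C * (q ^ d k) ^ (1 + Real.log r / L) := by
        rw [Real.rpow_add hqd0, Real.rpow_one]; ring
    _ ≤ C * (q ^ d k) ^ ((1 + Real.log r / L).toNNReal : ℝ) := by
        gcongr; exact Real.le_coe_toNNReal _

end PorousDimension

section PolynomialPart

open Polynomial

variable {K : Type*} [Field K]

@[simp] lemma polyF_zero : polyF (0 : K[X]) = 0 :=
  map_zero (aeval (HahnSeries.single (-1 : ℤ) (1 : K)))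

@[simp] lemma polyF_one : polyF (1 : K[X]) = 1 :=
  map_one (aeval (HahnSeries.single (-1 : ℤ) (1 : K)))

@[simp] lemma polyF_add (P Q : K[X]) : polyF (P + Q) = polyF P + polyF Q :=
  map_add (aeval (HahnSeries.single (-1 : ℤ) (1 : K))) P Q

@[simp] lemma polyF_sub (P Q : K[X]) : polyF (P - Q) = polyF P - polyF Q :=
  map_sub (aeval (HahnSeries.single (-1 : ℤ) (1 : K))) P Q

@[simp] lemma polyF_mul (P Q : K[X]) : polyF (P * Q) = polyF P * polyF Q :=
  map_mul (aeval (HahnSeries.single (-1 : ℤ) (1 : K))) P Q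

lemma toL_polyF_monomial (n : ℕ) (a : K) :
    toL (polyF (monomial n a)) = HahnSeries.single (-(n : ℤ)) a := by
  have hC : algebraMap K (LaurentSeries K) a = HahnSeries.C a := by
    rw [HahnSeries.algebraMap_apply', PowerSeries.algebraMap_apply, Algebra.algebraMap_self_apply,
      HahnSeries.ofPowerSeries_C]
  rw [toL, polyF, aeval_monomial, hC]
  simp [HahnSeries.C_apply, HahnSeries.single_mul_single]

lemma coeff_toL_polyF (P : K[X]) (j : ℤ) :
    (toL (polyF P)).coeff j = if j ≤ 0 then P.coeff (-j).toNat else 0 := by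
  induction P using Polynomial.induction_on' with
  | add P Q hP hQ =>
    have hadd : toL (polyF (P + Q)) = toL (polyF P) + toL (polyF Q) := polyF_add P Q
    rw [hadd, HahnSeries.coeff_add, hP, hQ, coeff_add, ite_add_ite, add_zero]
  | monomial n a =>
    rw [toL_polyF_monomial, HahnSeries.coeff_single, coeff_monomial]
    grind

lemma coeff_toL_polyF_neg_natDegree_ne_zero {P : K[X]} (hP : P ≠ 0) :
    (toL (polyF P)).coeff (-P.natDegree) ≠ 0 := by
  simpa [coeff_toL_polyF] using hP

lemma polyF_ne_zero {P : K[X]} (hP : P ≠ 0) : polyF P ≠ 0 :=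
  HahnSeries.ne_zero_of_coeff_ne_zero (coeff_toL_polyF_neg_natDegree_ne_zero hP)

lemma coeff_intPoly (x : FF K) (n : ℕ) : (intPoly x).coeff n = (toL x).coeff (-n) := by
  simp only [intPoly, finsetSum_coeff, coeff_monomial, Finset.sum_ite_eq', Finset.mem_range]
  split_ifs with h
  · rfl
  · exact (HahnSeries.coeff_eq_zero_of_lt_order (by lia)).symm

lemma coeff_toL_fracPart (x : FF K) (j : ℤ) :
    (toL (fracPart x)).coeff j = if 1 ≤ j then (toL x).coeff j else 0 := rfl

lemma polyF_intPoly_add_fracPart (x : FF K) : polyF (intPoly x) + fracPart x = x := by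
  change toL (polyF (intPoly x)) + toL (fracPart x) = toL x
  ext j
  rw [HahnSeries.coeff_add, coeff_toL_polyF, coeff_toL_fracPart, coeff_intPoly]
  rcases le_or_gt j 0 with hj | hj
  · rw [if_pos hj, if_neg (by lia), add_zero, Int.toNat_of_nonneg (by lia), neg_neg]
  · rw [if_neg hj.not_ge, if_pos (by lia), zero_add]

end PolynomialPart

section LaurentNorm

open PiNat Polynomial

variable {K : Type*} [Field K] [Fintype K]

lemma one_lt_card_field : (1 : ℝ) < Fintype.card K :=
  Nat.one_lt_cast.2 Fintype.one_lt_card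

lemma exists_inv_card_pow_lt {ε : ℝ} (hε : 0 < ε) :
    ∃ c ≠ 0, ((Fintype.card K : ℝ) ^ c)⁻¹ < ε := by
  obtain ⟨c, hc⟩ := pow_unbounded_of_one_lt (max 1 ε⁻¹) (one_lt_card_field (K := K))
  rw [max_lt_iff] at hc
  refine ⟨c, ?_, inv_lt_of_inv_lt₀ hε hc.2⟩
  rintro rfl
  exact hc.1.ne' (pow_zero _)

lemma fnorm_of_ne_zero {x : FF K} (hx : x ≠ 0) :
    fnorm x = (Fintype.card K : ℝ) ^ (-(toL x).order) :=
  if_neg hx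

lemma fnorm_mul (x y : FF K) : fnorm (x * y) = fnorm x * fnorm y := by
  rcases eq_or_ne x 0 with rfl | hx
  · rw [zero_mul, fnorm_eq_zero.2 rfl, zero_mul]
  rcases eq_or_ne y 0 with rfl | hy
  · rw [mul_zero, fnorm_eq_zero.2 rfl, mul_zero]
  have horder : (toL (x * y)).order = (toL x).order + (toL y).order := HahnSeries.order_mul hx hy
  rw [fnorm_of_ne_zero hx, fnorm_of_ne_zero hy, fnorm_of_ne_zero (mul_ne_zero hx hy), horder,
    neg_add, zpow_add₀ (by positivity)]

instance : NormedField (FF K) where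
  __ := (inferInstance : Field (FF K))
  __ := (inferInstance : MetricSpace (FF K))
  norm := fnorm
  dist_eq x y := by
    rw [neg_add_eq_sub, ← neg_sub, fnorm_neg]
    rfl
  norm_mul := fnorm_mul

lemma norm_eq_fnorm (x : FF K) : ‖x‖ = fnorm x := rfl

instance : IsUltrametricDist (FF K) :=
  IsUltrametricDist.isUltrametricDist_of_forall_norm_add_le_max_norm fnorm_add_le

lemma norm_lt_zpow_neg_iff {x : FF K} {m : ℤ} :
    ‖x‖ < (Fintype.card K : ℝ) ^ (-m) ↔ ∀ i ≤ m, (toL x).coeff i = 0 := by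
  rcases eq_or_ne x 0 with rfl | hx
  · simp only [norm_zero, toL_zero, HahnSeries.coeff_zero, implies_true, iff_true]
    positivity
  rw [norm_eq_fnorm, fnorm_of_ne_zero hx, zpow_lt_zpow_iff_right₀ one_lt_card_field,
    neg_lt_neg_iff]
  refine ⟨fun h i hi ↦ HahnSeries.coeff_eq_zero_of_lt_order (hi.trans_lt h), fun h ↦ ?_⟩
  by_contra! hm
  exact hx (HahnSeries.coeff_order_eq_zero.1 (h _ hm))

lemma norm_lt_one_iff {x : FF K} : ‖x‖ < 1 ↔ ∀ i ≤ 0, (toL x).coeff i = 0 := by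
  simpa using norm_lt_zpow_neg_iff (x := x) (m := 0)

lemma norm_polyF {P : K[X]} (hP : P ≠ 0) : ‖polyF P‖ = (Fintype.card K : ℝ) ^ P.natDegree := by
  have horder : (toL (polyF P)).order = -P.natDegree := by
    refine (HahnSeries.order_le_of_coeff_ne_zero
      (coeff_toL_polyF_neg_natDegree_ne_zero hP)).antisymm ?_
    refine (HahnSeries.le_order_iff_forall (x := toL (polyF P)) (polyF_ne_zero hP)).2 fun j hj ↦ ?_
    rw [coeff_toL_polyF, if_pos (by lia), coeff_eq_zero_of_natDegree_lt (by lia)]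
  rw [norm_eq_fnorm, fnorm_of_ne_zero (polyF_ne_zero hP), horder, neg_neg, zpow_natCast]

lemma norm_polyF_eq_of_degree_eq {P Q : K[X]} (h : P.degree = Q.degree) :
    ‖polyF P‖ = ‖polyF Q‖ := by
  rcases eq_or_ne Q 0 with rfl | hQ
  · rw [degree_eq_bot.1 (h.trans degree_zero)]
  · have hP : P ≠ 0 := fun hP ↦ hQ (degree_eq_bot.1 (by rw [← h, hP, degree_zero]))
    rw [norm_polyF hP, norm_polyF hQ, natDegree_eq_of_degree_eq h]

lemma norm_fracPart_lt_one (x : FF K) : ‖fracPart x‖ < 1 :=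
  norm_lt_one_iff.2 fun i hi ↦ by rw [coeff_toL_fracPart, if_neg (by lia)]

/-- The digits `a₁, a₂, …` of the fractional part `∑_{i ≥ 1} aᵢ z⁻ⁱ` of `θ`, with the digit of
`z^{-(i+1)}` at index `i`. They identify the unit ball with the sequence space `ℕ → K`. -/
def fracDigits (θ : FF K) : ℕ → K := fun i ↦ (toL θ).coeff (i + 1)

lemma fracDigits_mem_cylinder_iff {x y : FF K} (hx : ‖x‖ < 1) (hy : ‖y‖ < 1) (n : ℕ) :
    fracDigits y ∈ cylinder (fracDigits x) n ↔ ‖y - x‖ < ((Fintype.card K : ℝ) ^ n)⁻¹ := by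
  rw [← zpow_natCast, ← zpow_neg, norm_lt_zpow_neg_iff, mem_cylinder_iff]
  simp only [toL_sub, HahnSeries.coeff_sub, sub_eq_zero, fracDigits]
  refine ⟨fun h i hi ↦ ?_, fun h i hi ↦ h _ (by lia)⟩
  rcases le_or_gt i 0 with hi0 | hi0
  · rw [norm_lt_one_iff.1 hx i hi0, norm_lt_one_iff.1 hy i hi0]
  · obtain ⟨m, rfl⟩ : ∃ m : ℕ, i = m + 1 := ⟨(i - 1).toNat, by lia⟩
    exact h m (by lia)

end LaurentNorm

section ContinuedFractions

open Polynomial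

section Convergents

variable {K : Type*} [Field K] {α : FF K}

/-- The numerator `P_k` of the `k`-th convergent of the continued fraction expansion of `α`:
`P_0 = 0`, `P_1 = 1`, `P_{k+2} = A_{k+2} P_{k+1} + P_k`. -/
def cfP (α : FF K) : ℕ → K[X]
  | 0 => 0
  | 1 => 1
  | (k + 2) => pquot α (k + 1) * cfP α (k + 1) + cfP α k

lemma FIrrational.ne_zero (hα : FIrrational α) : α ≠ 0 := by
  rintro rfl
  exact hα 0 1 one_ne_zero (by simp)

lemma inv_eq_polyF_add_gaussMap (x : FF K) : x⁻¹ = polyF (intPoly x⁻¹) + gaussMap x :=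
  (polyF_intPoly_add_fracPart x⁻¹).symm

lemma FIrrational.gaussMap (hα : FIrrational α) : FIrrational (gaussMap α) := by
  intro P Q hQ hPQ
  set A := intPoly α⁻¹
  have hinv : α⁻¹ * polyF Q = polyF (A * Q + P) := by
    rw [inv_eq_polyF_add_gaussMap, add_mul, hPQ, polyF_add, polyF_mul]
  have hne : A * Q + P ≠ 0 := by
    intro h
    rw [h, polyF_zero] at hinv
    exact mul_ne_zero (inv_ne_zero hα.ne_zero) (polyF_ne_zero hQ) hinv
  exact hα Q _ hne (by rw [← hinv, mul_inv_cancel_left₀ hα.ne_zero])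

lemma FIrrational.iterate_gaussMap (hα : FIrrational α) (k : ℕ) :
    FIrrational (FPSDA.gaussMap^[k] α) := by
  induction k with
  | zero => exact hα
  | succ k ih => rw [Function.iterate_succ_apply']; exact ih.gaussMap

lemma inv_iterate_gaussMap (α : FF K) (k : ℕ) :
    (gaussMap^[k] α)⁻¹ = polyF (pquot α k) + gaussMap^[k + 1] α := by
  rw [Function.iterate_succ_apply', pquot]
  exact inv_eq_polyF_add_gaussMap _

lemma cfP_mul_cfQ_sub_cfP_mul_cfQ (α : FF K) (k : ℕ) :
    cfP α (k + 1) * cfQ α k - cfP α k * cfQ α (k + 1) = (-1) ^ k := by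
  induction k with
  | zero => simp [cfP, cfQ]
  | succ k ih =>
    rw [cfP, cfQ]
    linear_combination -ih

lemma isCoprime_cfP_cfQ (α : FF K) (k : ℕ) : IsCoprime (cfP α k) (cfQ α k) := by
  refine ⟨-(-1) ^ k * cfQ α (k + 1), (-1) ^ k * cfP α (k + 1), ?_⟩
  have hsq : ((-1 : K[X]) ^ k) ^ 2 = 1 := by rw [← pow_mul, mul_comm, pow_mul]; simp
  linear_combination (-1) ^ k * cfP_mul_cfQ_sub_cfP_mul_cfQ α k + hsq

lemma mul_polyF_cfQ_sub_polyF_cfP_succ (hirr : FIrrational α) (k : ℕ) :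
    α * polyF (cfQ α (k + 1)) - polyF (cfP α (k + 1)) =
      -gaussMap^[k + 1] α * (α * polyF (cfQ α k) - polyF (cfP α k)) := by
  induction k with
  | zero =>
    have hpquot := inv_iterate_gaussMap α 0
    have hcancel : α * α⁻¹ = 1 := mul_inv_cancel₀ hirr.ne_zero
    simp only [cfQ, cfP, polyF_one, polyF_zero, Function.iterate_zero, id] at hpquot ⊢
    linear_combination hcancel - α * hpquot
  | succ k ih =>
    have hpquot := inv_iterate_gaussMap α (k + 1)
    have hcancel := mul_inv_cancel₀ (hirr.iterate_gaussMap (k + 1)).ne_zero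
    rw [cfQ, cfP, polyF_add, polyF_add, polyF_mul, polyF_mul]
    linear_combination (gaussMap^[k + 1] α)⁻¹ * ih -
      (α * polyF (cfQ α (k + 1)) - polyF (cfP α (k + 1))) * hpquot -
      (α * polyF (cfQ α k) - polyF (cfP α k)) * hcancel

end Convergents

variable {K : Type*} [Field K] [Fintype K] {α : FF K}

lemma norm_iterate_gaussMap_lt_one (hα : ‖α‖ < 1) (k : ℕ) : ‖gaussMap^[k] α‖ < 1 := by
  cases k with
  | zero => exact hα
  | succ k => rw [Function.iterate_succ_apply']; exact norm_fracPart_lt_one _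

lemma one_lt_inv_norm_iterate_gaussMap (hα : ‖α‖ < 1) (hirr : FIrrational α) (k : ℕ) :
    1 < ‖gaussMap^[k] α‖⁻¹ :=
  (one_lt_inv₀ (norm_pos_iff.2 (hirr.iterate_gaussMap k).ne_zero)).2
    (norm_iterate_gaussMap_lt_one hα k)

lemma norm_polyF_pquot (hα : ‖α‖ < 1) (hirr : FIrrational α) (k : ℕ) :
    ‖polyF (pquot α k)‖ = ‖gaussMap^[k] α‖⁻¹ := by
  have hlt : ‖-gaussMap^[k + 1] α‖ < ‖(gaussMap^[k] α)⁻¹‖ := by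
    rw [norm_inv, norm_neg]
    exact (norm_iterate_gaussMap_lt_one hα _).trans (one_lt_inv_norm_iterate_gaussMap hα hirr k)
  rw [eq_sub_of_add_eq (inv_iterate_gaussMap α k).symm, sub_eq_add_neg,
    IsUltrametricDist.norm_add_eq_max_of_norm_ne_norm hlt.ne', max_eq_left hlt.le, norm_inv]

lemma cfQ_ne_zero_and_norm_polyF_cfQ_succ (hα : ‖α‖ < 1) (hirr : FIrrational α) (k : ℕ) :
    cfQ α k ≠ 0 ∧ ‖polyF (cfQ α (k + 1))‖ = ‖gaussMap^[k] α‖⁻¹ * ‖polyF (cfQ α k)‖ := by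
  induction k with
  | zero => simp [cfQ, norm_polyF_pquot hα hirr 0]
  | succ k ih =>
    obtain ⟨hQ, hnorm⟩ := ih
    have hQpos : 0 < ‖polyF (cfQ α k)‖ := norm_pos_iff.2 (polyF_ne_zero hQ)
    have hk := one_lt_inv_norm_iterate_gaussMap hα hirr k
    have hk' := one_lt_inv_norm_iterate_gaussMap hα hirr (k + 1)
    have hQ' : cfQ α (k + 1) ≠ 0 := by
      intro h
      rw [h, polyF_zero, norm_zero] at hnorm
      exact (mul_pos (one_pos.trans hk) hQpos).ne hnorm
    have hlt : ‖polyF (cfQ α k)‖ < ‖polyF (pquot α (k + 1)) * polyF (cfQ α (k + 1))‖ := by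
      rw [norm_mul, norm_polyF_pquot hα hirr, hnorm]
      exact (lt_mul_of_one_lt_left hQpos hk).trans (lt_mul_of_one_lt_left (by positivity) hk')
    refine ⟨hQ', ?_⟩
    rw [cfQ, polyF_add, polyF_mul, IsUltrametricDist.norm_add_eq_max_of_norm_ne_norm hlt.ne',
      max_eq_left hlt.le, norm_mul, norm_polyF_pquot hα hirr]

lemma cfQ_ne_zero (hα : ‖α‖ < 1) (hirr : FIrrational α) (k : ℕ) : cfQ α k ≠ 0 :=
  (cfQ_ne_zero_and_norm_polyF_cfQ_succ hα hirr k).1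

lemma norm_polyF_cfQ_succ (hα : ‖α‖ < 1) (hirr : FIrrational α) (k : ℕ) :
    ‖polyF (cfQ α (k + 1))‖ = ‖gaussMap^[k] α‖⁻¹ * ‖polyF (cfQ α k)‖ :=
  (cfQ_ne_zero_and_norm_polyF_cfQ_succ hα hirr k).2

lemma strictMono_natDegree_cfQ (hα : ‖α‖ < 1) (hirr : FIrrational α) :
    StrictMono fun k ↦ (cfQ α k).natDegree := by
  refine strictMono_nat_of_lt_succ fun k ↦ ?_
  have hQ := cfQ_ne_zero hα hirr
  have hlt : ‖polyF (cfQ α k)‖ < ‖polyF (cfQ α (k + 1))‖ := by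
    rw [norm_polyF_cfQ_succ hα hirr]
    exact lt_mul_of_one_lt_left (norm_pos_iff.2 (polyF_ne_zero (hQ k)))
      (one_lt_inv_norm_iterate_gaussMap hα hirr k)
  rwa [norm_polyF (hQ k), norm_polyF (hQ (k + 1)),
    pow_lt_pow_iff_right₀ one_lt_card_field] at hlt

lemma norm_convergent_error_mul_norm_polyF_cfQ (hα : ‖α‖ < 1) (hirr : FIrrational α) (k : ℕ) :
    ‖α * polyF (cfQ α k) - polyF (cfP α k)‖ * ‖polyF (cfQ α k)‖ = ‖gaussMap^[k] α‖ := by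
  induction k with
  | zero => simp [cfQ, cfP]
  | succ k ih =>
    have hne : ‖gaussMap^[k] α‖ ≠ 0 := norm_ne_zero_iff.2 (hirr.iterate_gaussMap k).ne_zero
    rw [mul_polyF_cfQ_sub_polyF_cfP_succ hirr, norm_polyF_cfQ_succ hα hirr, norm_mul, norm_neg]
    calc ‖gaussMap^[k + 1] α‖ * ‖α * polyF (cfQ α k) - polyF (cfP α k)‖ *
          (‖gaussMap^[k] α‖⁻¹ * ‖polyF (cfQ α k)‖)
        = ‖gaussMap^[k + 1] α‖ * ‖gaussMap^[k] α‖⁻¹ *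
          (‖α * polyF (cfQ α k) - polyF (cfP α k)‖ * ‖polyF (cfQ α k)‖) := by ring
      _ = ‖gaussMap^[k + 1] α‖ := by rw [ih, inv_mul_cancel_right₀ hne]

lemma norm_convergent_error_mul_norm_polyF_cfQ_lt_one (hα : ‖α‖ < 1) (hirr : FIrrational α)
    (k : ℕ) : ‖α * polyF (cfQ α k) - polyF (cfP α k)‖ * ‖polyF (cfQ α k)‖ < 1 :=
  (norm_convergent_error_mul_norm_polyF_cfQ hα hirr k).trans_lt
    (norm_iterate_gaussMap_lt_one hα k)

end ContinuedFractions

section InhomogeneousApproximation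

open PiNat Polynomial

lemma exists_degree_eq_and_dvd_mul_sub {K : Type*} [Field K] {P Q : K[X]} (hQ : Q ≠ 0)
    (hPQ : IsCoprime P Q) (y : K[X]) : ∃ x : K[X], x.degree = Q.degree ∧ Q ∣ P * x - y := by
  obtain ⟨a, b, hab⟩ := hPQ
  refine ⟨a * y % Q + Q, degree_add_eq_right_of_degree_lt (EuclideanDomain.mod_lt _ hQ), ?_⟩
  refine ⟨P * (1 - a * y / Q) - b * y, ?_⟩
  linear_combination P * EuclideanDomain.mod_add_div (a * y) Q + y * hab

variable {K : Type*} [Field K] [Fintype K] {α : FF K} {P Q : K[X]}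

lemma exists_norm_mul_sub_sub_mul_lt_one (hQ : Q ≠ 0) (hPQ : IsCoprime P Q)
    (happrox : ‖α * polyF Q - polyF P‖ * ‖polyF Q‖ < 1) (θ : FF K) :
    ∃ x y : K[X], ‖polyF x‖ = ‖polyF Q‖ ∧ ‖α * polyF x - polyF y - θ‖ * ‖polyF x‖ < 1 := by
  -- Solve `P x ≡ [θ Q] (mod Q)` with `deg x = deg Q`, and divide by `Q`.
  obtain ⟨x, hdeg, y, hy⟩ := exists_degree_eq_and_dvd_mul_sub hQ hPQ (intPoly (θ * polyF Q))
  have hx : ‖polyF x‖ = ‖polyF Q‖ := norm_polyF_eq_of_degree_eq hdeg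
  refine ⟨x, y, hx, ?_⟩
  have hsplit : (α * polyF x - polyF y - θ) * polyF Q =
      (α * polyF Q - polyF P) * polyF x - fracPart (θ * polyF Q) := by
    have hy' := congrArg polyF hy
    rw [polyF_sub, polyF_mul, polyF_mul] at hy'
    linear_combination hy' + polyF_intPoly_add_fracPart (θ * polyF Q)
  rw [hx, ← norm_mul, hsplit, sub_eq_add_neg]
  refine (IsUltrametricDist.norm_add_le_max _ _).trans_lt (max_lt ?_ ?_)
  · rwa [norm_mul, hx]
  · rw [norm_neg]
    exact norm_fracPart_lt_one _

lemma sdist_le (x : FF K) (y : K[X]) : sdist x ≤ ‖x - polyF y‖ :=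
  ciInf_le (f := fun y ↦ ‖x - polyF y‖) ⟨0, Set.forall_mem_range.2 fun _ ↦ norm_nonneg _⟩ y

/-- The `θ` in the unit ball with `‖x‖ ⟨α x - θ⟩ ≥ δ` for every polynomial `x` of norm at least
`R`: a uniform version of `Bad^δ(α)`. -/
def sBadFrom (α : FF K) (δ R : ℝ) : Set (FF K) :=
  {θ | ‖θ‖ < 1 ∧ ∀ x : K[X], R ≤ ‖polyF x‖ → δ ≤ ‖polyF x‖ * sdist (α * polyF x - θ)}

lemma sBad_subset_iUnion_sBadFrom (α : FF K) {δ ε : ℝ} (hε : 0 < ε) (hδ : δ < ε) :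
    sBad α ε ⊆ ⋃ N : ℕ, sBadFrom α δ N := by
  rintro θ ⟨hθ, hliminf⟩
  have hlt : ENNReal.ofReal δ < sBadLiminf α θ :=
    ((ENNReal.ofReal_lt_ofReal_iff hε).2 hδ).trans_le hliminf
  obtain ⟨R, hR⟩ := eventually_atTop.1 (eventually_comap.1 (eventually_lt_of_lt_liminf hlt))
  obtain ⟨N, hN⟩ := exists_nat_ge R
  refine Set.mem_iUnion.2 ⟨N, hθ, fun x hx ↦ ?_⟩
  exact (ENNReal.ofReal_lt_ofReal_iff'.1 (hR _ (hN.trans hx) x rfl)).1.le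

variable {c : ℕ} {δ R : ℝ}

lemma isPorousAt_fracDigits_image_sBadFrom (hQ : Q ≠ 0) (hPQ : IsCoprime P Q)
    (happrox : ‖α * polyF Q - polyF P‖ * ‖polyF Q‖ < 1)
    (hδ : ((Fintype.card K : ℝ) ^ c)⁻¹ ≤ δ) (hR : R ≤ ‖polyF Q‖) :
    IsPorousAt (fracDigits '' sBadFrom α δ R) Q.natDegree c := by
  rintro _ ⟨θ₀, hθ₀, rfl⟩
  obtain ⟨x, y, hx, hxy⟩ := exists_norm_mul_sub_sub_mul_lt_one hQ hPQ happrox θ₀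
  set n := Q.natDegree
  set θ₁ := α * polyF x - polyF y
  have hxn : ‖polyF x‖ = (Fintype.card K : ℝ) ^ n := hx.trans (norm_polyF hQ)
  have hclose : ‖θ₁ - θ₀‖ < ((Fintype.card K : ℝ) ^ n)⁻¹ := by
    rwa [hxn, ← lt_div_iff₀ (by positivity), one_div] at hxy
  have hθ₁ : ‖θ₁‖ < 1 := by
    rw [← sub_add_cancel θ₁ θ₀]
    refine (IsUltrametricDist.norm_add_le_max _ _).trans_lt (max_lt (hclose.trans_le ?_) hθ₀.1)
    exact inv_le_one_of_one_le₀ (one_le_pow₀ one_le_q)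
  refine ⟨fracDigits θ₁, (fracDigits_mem_cylinder_iff hθ₀.1 hθ₁ n).2 hclose,
    Set.disjoint_left.2 ?_⟩
  rintro _ ⟨θ, hθ, rfl⟩ hmem
  have hnear : ‖θ - θ₁‖ < ((Fintype.card K : ℝ) ^ (n + c))⁻¹ :=
    (fracDigits_mem_cylinder_iff hθ₁ hθ.1 _).1 hmem
  refine (hδ.trans (hθ.2 x (hR.trans hx.ge))).not_gt ?_
  calc ‖polyF x‖ * sdist (α * polyF x - θ)
      ≤ ‖polyF x‖ * ‖α * polyF x - θ - polyF y‖ := by gcongr; exact sdist_le _ y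
    _ = (Fintype.card K : ℝ) ^ n * ‖θ - θ₁‖ := by rw [hxn, sub_right_comm, norm_sub_rev]
    _ < (Fintype.card K : ℝ) ^ n * ((Fintype.card K : ℝ) ^ (n + c))⁻¹ := by gcongr
    _ = ((Fintype.card K : ℝ) ^ c)⁻¹ := by rw [pow_add]; field_simp

variable {L : ℝ}

lemma dimH_sBadFrom_le (hα : ‖α‖ < 1) (hirr : FIrrational α) (hc : c ≠ 0)
    (hδ : ((Fintype.card K : ℝ) ^ c)⁻¹ ≤ δ) (R : ℝ) (hL : 0 < L)
    (hgrowth : ∃ᶠ k : ℕ in atTop, Real.log ‖polyF (cfQ α k)‖ ≤ L * k) :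
    dimH (sBadFrom α δ R) ≤
      ENNReal.ofReal (1 + Real.log (1 - ((Fintype.card K : ℝ) ^ c)⁻¹) / (c * L)) := by
  have hdeg := strictMono_natDegree_cfQ hα hirr
  have hnorm k : ‖polyF (cfQ α k)‖ = (Fintype.card K : ℝ) ^ (cfQ α k).natDegree :=
    norm_polyF (cfQ_ne_zero hα hirr k)
  have hlarge : ∀ᶠ k in atTop, R ≤ ‖polyF (cfQ α k)‖ := by
    simp only [hnorm]
    exact ((tendsto_pow_atTop_atTop_of_one_lt one_lt_card_field).comp
      hdeg.tendsto_atTop).eventually_ge_atTop R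
  refine dimH_le_of_eventually_isPorousAt (f := fracDigits) (fun x hx y hy n h ↦ ?_) hdeg hc
    (hlarge.mono fun k hR ↦ isPorousAt_fracDigits_image_sBadFrom (cfQ_ne_zero hα hirr k)
      (isCoprime_cfP_cfQ α k) (norm_convergent_error_mul_norm_polyF_cfQ_lt_one hα hirr k) hδ hR)
    hL (by simpa only [hnorm] using hgrowth)
  rw [dist_comm, dist_eq_norm, inv_pow]
  exact ((fracDigits_mem_cylinder_iff hx.1 hy.1 n).1 h).le

lemma dimH_sBad_le (hα : ‖α‖ < 1) (hirr : FIrrational α) {ε : ℝ} (hc : c ≠ 0)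
    (hε : ((Fintype.card K : ℝ) ^ c)⁻¹ < ε) (hL : 0 < L)
    (hgrowth : ∃ᶠ k : ℕ in atTop, Real.log ‖polyF (cfQ α k)‖ ≤ L * k) :
    dimH (sBad α ε) ≤
      ENNReal.ofReal (1 + Real.log (1 - ((Fintype.card K : ℝ) ^ c)⁻¹) / (c * L)) := by
  have hε0 : 0 < ε := lt_of_le_of_lt (by positivity) hε
  refine (dimH_mono (sBad_subset_iUnion_sBadFrom α hε0 hε)).trans ?_
  rw [dimH_iUnion]
  exact iSup_le fun N ↦ dimH_sBadFrom_le hα hirr hc le_rfl N hL hgrowth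

end InhomogeneousApproximation

lemma frequently_le_mul_of_liminf_ofReal_div_lt {u : ℕ → ℝ} {L : ℝ≥0}
    (hL : liminf (fun k : ℕ ↦ ENNReal.ofReal (u k / k)) atTop < L) :
    ∃ᶠ k : ℕ in atTop, u k ≤ L * k := by
  refine ((frequently_lt_of_liminf_lt (by isBoundedDefault) hL).and_eventually
    (eventually_gt_atTop 0)).mono fun k hk ↦ ?_
  have hlt : u k / k < L := (ENNReal.ofReal_lt_ofReal_iff'.1 (hk.1.trans_eq (by simp))).1
  exact ((div_lt_iff₀ (Nat.cast_pos.2 hk.2)).1 hlt).le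

end FPSDA

/-- (Theorem 9.1 of the paper.) If `liminf_k (log ‖Q_k‖) / k < ∞`, then `Bad^ε(α)` has
Hausdorff dimension strictly less than `1` for every `ε > 0`. -/
theorem dimH_sBad_lt_one {K : Type*} [Field K] [Fintype K]
    (α : FF K) (hα : fnorm α < 1) (hirr : FIrrational α)
    (hliminf : Filter.liminf
        (fun k : ℕ => ENNReal.ofReal (Real.log (fnorm (polyF (cfQ α k))) / (k : ℝ)))
        Filter.atTop < ⊤) :
    ∀ ε : ℝ, 0 < ε → dimH (sBad α ε) < 1 := by
  intro ε hε
  obtain ⟨L, hL, -⟩ := ENNReal.lt_iff_exists_nnreal_btwn.1 hliminf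
  have hL0 : (0 : ℝ) < L := NNReal.coe_pos.2 (ENNReal.coe_pos.1 (pos_of_gt hL))
  have hgrowth := frequently_le_mul_of_liminf_ofReal_div_lt hL
  obtain ⟨c, hc, hcε⟩ := exists_inv_card_pow_lt (K := K) hε
  refine (dimH_sBad_le hα hirr hc hcε hL0 hgrowth).trans_lt (ENNReal.ofReal_lt_one.2 ?_)
  have hlog : Real.log (1 - ((Fintype.card K : ℝ) ^ c)⁻¹) < 0 :=
    Real.log_neg (one_sub_inv_card_pow_pos hc) (one_sub_inv_card_pow_lt_one c)
  have hc0 : (0 : ℝ) < c := by positivity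
  linarith [div_neg_of_neg_of_pos hlog (mul_pos hc0 hL0)]
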